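/- For every real number x > 0, the double inequality ln(x + 1/2) − 1/x < ψ(x) < ln(x + 1) − 1/x holds. -/

import Mathlib

/-!
Since `ψ (x + 1) = ψ x + 1 / x`, the claim is `log (x + 1/2) < ψ (x + 1) < log (x + 1)`.

Log-convexity of `Γ` compares `ψ` with the slope `log (Γ (y + 1)) - log (Γ y) = log y`, which gives
`log y - 1 / y ≤ ψ y ≤ log y`, hence `ψ y - log y → 0` and more generally
`ψ y - log (y + c) → 0` as `y → ∞` (`tendsto_digamma_sub_log`).

Along `y = x + 1 + n`, the sequence `ψ y - log (y - 1/2)` is strictly decreasing, because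
`log (1 + t) > 2 t / (t + 2)` with `t = 1 / (y - 1/2)` reads `log (y + 1/2) - log (y - 1/2) > 1 / y`,
and `ψ y - log y` is strictly increasing, because `log (1 + 1 / y) < 1 / y`.
Both tend to `0`, so their initial terms are respectively positive and negative.
-/

open Real

/-- The digamma function `ψ = Γ′/Γ`. -/
noncomputable def digamma (x : ℝ) : ℝ := deriv Real.Gamma x / Real.Gamma x

open Filter Topology

lemma differentiableAt_Gamma_of_pos {y : ℝ} (hy : 0 < y) : DifferentiableAt ℝ Real.Gamma y :=
  Real.differentiableAt_Gamma fun m => by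
    have : (0 : ℝ) ≤ m := m.cast_nonneg
    linarith

lemma hasDerivAt_log_Gamma {y : ℝ} (hy : 0 < y) :
    HasDerivAt (Real.log ∘ Real.Gamma) (digamma y) y :=
  (differentiableAt_Gamma_of_pos hy).hasDerivAt.log (Real.Gamma_pos_of_pos hy).ne'

lemma log_Gamma_add_one {y : ℝ} (hy : 0 < y) :
    Real.log (Real.Gamma (y + 1)) = Real.log y + Real.log (Real.Gamma y) := by
  rw [Real.Gamma_add_one hy.ne', Real.log_mul hy.ne' (Real.Gamma_pos_of_pos hy).ne']

lemma digamma_add_one {y : ℝ} (hy : 0 < y) : digamma (y + 1) = digamma y + 1 / y := by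
  have h1 : HasDerivAt (fun z => Real.log (Real.Gamma (z + 1))) (digamma (y + 1)) y :=
    (hasDerivAt_log_Gamma (by linarith : 0 < y + 1)).comp_add_const y 1
  have h2 : HasDerivAt (fun z => Real.log z + Real.log (Real.Gamma z)) (y⁻¹ + digamma y) y :=
    (Real.hasDerivAt_log hy.ne').add (hasDerivAt_log_Gamma hy)
  have h3 : (fun z => Real.log (Real.Gamma (z + 1))) =ᶠ[𝓝 y]
      fun z => Real.log z + Real.log (Real.Gamma z) := by
    filter_upwards [lt_mem_nhds hy] with z hz using log_Gamma_add_one hz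
  rw [h1.unique (h2.congr_of_eventuallyEq h3), one_div, add_comm]

lemma slope_log_Gamma {y : ℝ} (hy : 0 < y) :
    slope (Real.log ∘ Real.Gamma) y (y + 1) = Real.log y := by
  simp [slope_def_field, log_Gamma_add_one hy]

lemma digamma_le_log {y : ℝ} (hy : 0 < y) : digamma y ≤ Real.log y := by
  rw [← slope_log_Gamma hy]
  exact Real.convexOn_log_Gamma.le_slope_of_hasDerivAt hy (by simp; linarith) (by linarith)
    (hasDerivAt_log_Gamma hy)

lemma log_sub_le_digamma {y : ℝ} (hy : 0 < y) : Real.log y - 1 / y ≤ digamma y := by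
  have h : Real.log y ≤ digamma (y + 1) := by
    rw [← slope_log_Gamma hy]
    exact Real.convexOn_log_Gamma.slope_le_of_hasDerivAt hy (by simp; linarith) (by linarith)
      (hasDerivAt_log_Gamma (by linarith))
  rw [digamma_add_one hy] at h
  linarith

lemma tendsto_digamma_sub_log (c : ℝ) :
    Tendsto (fun y => digamma y - Real.log (y + c)) atTop (𝓝 0) := by
  have h0 : Tendsto (fun y => digamma y - Real.log y) atTop (𝓝 0) := by
    have hl : Tendsto (fun y : ℝ => -(1 / y)) atTop (𝓝 0) := by
      simpa using (tendsto_inv_atTop_zero (𝕜 := ℝ)).neg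
    refine tendsto_of_tendsto_of_tendsto_of_le_of_le' hl tendsto_const_nhds ?_ ?_
    · filter_upwards [eventually_gt_atTop 0] with y hy
      linarith [log_sub_le_digamma hy]
    · filter_upwards [eventually_gt_atTop 0] with y hy
      linarith [digamma_le_log hy]
  simpa using h0.sub (Real.tendsto_log_comp_add_sub_log c)

lemma tendsto_digamma_sub_log_nat (y c : ℝ) :
    Tendsto (fun n : ℕ => digamma (y + n) - Real.log (y + n + c)) atTop (𝓝 0) :=
  (tendsto_digamma_sub_log c).comp
    (tendsto_atTop_add_const_left _ y tendsto_natCast_atTop_atTop)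

lemma log_sub_half_lt_digamma {y : ℝ} (hy : 1 / 2 < y) : Real.log (y - 1 / 2) < digamma y := by
  have hanti : StrictAnti fun n : ℕ => digamma (y + n) - Real.log (y + n + -(1 / 2)) := by
    refine strictAnti_nat_of_succ_lt fun n => ?_
    have hn : (0 : ℝ) ≤ n := n.cast_nonneg
    have hz : 1 / 2 < y + n := by linarith
    push_cast
    rw [← add_assoc]
    generalize y + (n : ℝ) = z at hz
    obtain ⟨w, rfl⟩ : ∃ w, z = w + 1 / 2 := ⟨z - 1 / 2, by ring⟩
    have hw : 0 < w := by linarith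
    have hlog := Real.lt_log_one_add_of_pos (one_div_pos.2 hw)
    have e1 : 1 + 1 / w = (w + 1) / w := by
      field_simp
    have e2 : 2 * (1 / w) / (1 / w + 2) = 1 / (w + 1 / 2) := by
      field_simp
      ring
    rw [e1, e2, Real.log_div (by linarith) hw.ne'] at hlog
    rw [show w + 1 / 2 + 1 + -(1 / 2) = w + 1 by ring, show w + 1 / 2 + -(1 / 2) = w by ring]
    rw [digamma_add_one (by linarith)]
    linarith
  have h1 := hanti.antitone.le_of_tendsto (tendsto_digamma_sub_log_nat y _) 1
  have h2 := h1.trans_lt (hanti zero_lt_one)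
  simpa [← sub_eq_add_neg] using h2

lemma digamma_lt_log {y : ℝ} (hy : 0 < y) : digamma y < Real.log y := by
  have hmono : StrictMono fun n : ℕ => digamma (y + n) - Real.log (y + n + 0) := by
    refine strictMono_nat_of_lt_succ fun n => ?_
    have hn : (0 : ℝ) ≤ n := n.cast_nonneg
    have hz : 0 < y + n := by linarith
    push_cast
    rw [← add_assoc]
    generalize y + (n : ℝ) = z at hz
    have hlog := Real.log_lt_sub_one_of_pos (x := (z + 1) / z) (by positivity)
      (by rw [Ne, div_eq_one_iff_eq hz.ne']; linarith)
    have e : (z + 1) / z - 1 = 1 / z := by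
      field_simp
      ring
    rw [e, Real.log_div (by linarith) hz.ne'] at hlog
    rw [digamma_add_one hz, add_zero, add_zero]
    linarith
  have h1 := hmono.monotone.ge_of_tendsto (tendsto_digamma_sub_log_nat y _) 1
  have h2 := (hmono zero_lt_one).trans_le h1
  simpa using h2

theorem stmt_8 (x : ℝ) (hx : 0 < x) :
    Real.log (x + 1/2) - 1 / x < digamma x ∧
      digamma x < Real.log (x + 1) - 1 / x := by
  have h1 := log_sub_half_lt_digamma (y := x + 1) (by linarith)
  have h2 := digamma_lt_log (y := x + 1) (by linarith)
  rw [digamma_add_one hx] at h1 h2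
  rw [show x + 1 - 1 / 2 = x + 1 / 2 by ring] at h1
  constructor <;> linarith
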